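/- Consider Ensemble 2 of unstructured irregular GLDPC codes with variable-node edge-degree polynomial λ(x) = ∑_{d=2}^{d_v} λ_d x^{d−1} and check-node types with weight enumerators A^{(t)}(z); assume at least one check-node type has local minimum distance r_t = 2, and let C = 2·∑_{t : r_t = 2} ρ_t A_2^{(t)}/s_t. Then, for a code drawn uniformly at random from Ensemble 2 with block length N, the probability that its minimum distance equals 1 satisfies lim_{N→∞} Pr(d_min = 1) = 1 − exp(−λ′(0)·C/2) > 0, where λ′(0) = λ_2. -/

import Mathlib

open Filter

/-- The set of codewords of the binary linear local code with parity-check matrix `H`. -/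
def localCode {mr n : ℕ} (H : Matrix (Fin mr) (Fin n) (ZMod 2)) :
    Finset (Fin n → ZMod 2) :=
  Finset.univ.filter (fun v => Matrix.mulVec H v = 0)

/-- The number `A_2^{(t)}` of weight-2 codewords of the code with parity-check matrix `H`. -/
def numWeight2 {mr n : ℕ} (H : Matrix (Fin mr) (Fin n) (ZMod 2)) : ℕ :=
  ((localCode H).filter (fun v => hammingNorm v = 2)).card


namespace GLDPC
open Finset Classical

lemma fst_bound {α : Type*} [Fintype α] [DecidableEq α] (R : α → α → Prop) (d : ℕ)
    (hd : ∀ x, (univ.filter (fun y => R x y)).card ≤ d) (X : Finset α) :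
    (univ.filter (fun p : α × α => p.1 ∈ X ∧ R p.1 p.2)).card ≤ X.card * d := by
  have : (univ.filter (fun p : α × α => p.1 ∈ X ∧ R p.1 p.2)) =
      (X.sigma (fun x => univ.filter (fun y => R x y))).map
        (Equiv.sigmaEquivProd α α).toEmbedding := by
    ext ⟨x, y⟩
    simp only [mem_filter, mem_univ, true_and, mem_map_equiv, mem_sigma]
    rfl
  rw [this, card_map, card_sigma]
  calc _ ≤ ∑ x ∈ X, d := sum_le_sum (fun x _ => hd x)
    _ = _ := by simp

lemma snd_bound {α : Type*} [Fintype α] [DecidableEq α] (R : α → α → Prop) (d : ℕ)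
    (hsym : ∀ x y, R x y → R y x)
    (hd : ∀ x, (univ.filter (fun y => R x y)).card ≤ d) (X : Finset α) :
    (univ.filter (fun p : α × α => p.2 ∈ X ∧ R p.1 p.2)).card ≤ X.card * d := by
  refine le_trans ?_ (fst_bound R d hd X)
  apply card_le_card_of_injOn (fun p => (p.2, p.1))
  · rintro ⟨x, y⟩ h
    simp only [coe_filter, mem_univ, true_and, Set.mem_ofPred_eq] at h ⊢
    exact ⟨h.1, hsym _ _ h.2⟩
  · rintro ⟨x, y⟩ _ ⟨x', y'⟩ _ h
    simp only [Prod.mk.injEq] at h ⊢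
    exact ⟨h.2, h.1⟩

section inst
set_option linter.unusedSectionVars false
variable {S T V : Type*} [Fintype S] [Fintype T] [Fintype V]
  [DecidableEq S] [DecidableEq T] [DecidableEq V]
  (a b : V → S) (R : T → T → Prop)

noncomputable def G (A : Finset V) : Finset (S ≃ T) :=
  univ.filter (fun σ => ∀ v ∈ A, R (σ (a v)) (σ (b v)))

noncomputable def sock (A : Finset V) : Finset S := A.image a ∪ A.image b

noncomputable def U (A : Finset V) : Finset S := (sock a b A)ᶜ

lemma sock_card (ha : Function.Injective a) (hb : Function.Injective b)
    (hab : ∀ v w, a v ≠ b w) (A : Finset V) : (sock a b A).card = 2 * A.card := by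
  unfold sock
  rw [card_union_of_disjoint, card_image_of_injective _ ha, card_image_of_injective _ hb]
  · ring
  · rw [disjoint_left]
    intro x hx hx'
    simp only [mem_image] at hx hx'
    obtain ⟨v, _, rfl⟩ := hx
    obtain ⟨w, _, h⟩ := hx'
    exact hab v w h.symm

lemma U_card (ha : Function.Injective a) (hb : Function.Injective b)
    (hab : ∀ v w, a v ≠ b w) (A : Finset V) :
    (U a b A).card + 2 * A.card = Fintype.card S := by
  rw [← sock_card a b ha hb hab A]
  exact card_compl_add_card _

noncomputable def Nr (A : Finset V) (σ : S ≃ T) : ℕ :=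
  ((U a b A).offDiag.filter (fun p => R (σ p.1) (σ p.2))).card

lemma step_eq (ha : Function.Injective a) (hb : Function.Injective b)
    (hab : ∀ v w, a v ≠ b w) (A : Finset V) (v : V) (hv : v ∉ A) :
    (U a b A).offDiag.card * (G a b R (insert v A)).card = ∑ σ ∈ G a b R A, Nr a b R A σ := by
  unfold Nr
  have h := sum_card_bipartiteAbove_eq_sum_card_bipartiteBelow (s := G a b R A)
    (t := (U a b A).offDiag) (fun (σ : S ≃ T) (p : S × S) => R (σ p.1) (σ p.2))
  unfold bipartiteAbove bipartiteBelow at h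
  rw [h]
  symm
  apply sum_const_nat
  rintro ⟨x, y⟩ hxy
  simp only [mem_offDiag, U, mem_compl] at hxy
  obtain ⟨hx, hy, hne⟩ := hxy
  have hav : a v ∉ sock a b A := by
    simp only [sock, mem_union, mem_image, not_or, not_exists, not_and]
    exact ⟨fun w hw h => hv (ha h ▸ hw), fun w hw h => hab v w h.symm⟩
  have hbv : b v ∉ sock a b A := by
    simp only [sock, mem_union, mem_image, not_or, not_exists, not_and]
    exact ⟨fun w hw h => hab w v h, fun w hw h => hv (hb h ▸ hw)⟩
  obtain ⟨π, h1, h2, h3⟩ : ∃ π : Equiv.Perm S, π x = a v ∧ π y = b v ∧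
      ∀ z ∈ sock a b A, π z = z := by
    set y1 := Equiv.swap x (a v) y with hy1
    have hy1a : y1 ≠ a v := by
      intro h
      have : Equiv.swap x (a v) y = Equiv.swap x (a v) x := by
        rw [Equiv.swap_apply_left, ← hy1, h]
      exact hne ((Equiv.injective _ this).symm)
    have hy1s : y1 ∉ sock a b A := by
      rw [hy1, Equiv.swap_apply_def]
      split_ifs <;> assumption
    refine ⟨(Equiv.swap x (a v)).trans (Equiv.swap y1 (b v)), ?_, ?_, ?_⟩
    · rw [Equiv.trans_apply, Equiv.swap_apply_left,
        Equiv.swap_apply_of_ne_of_ne hy1a.symm (hab v v)]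
    · rw [Equiv.trans_apply, ← hy1, Equiv.swap_apply_left]
    · intro z hz
      rw [Equiv.trans_apply, Equiv.swap_apply_of_ne_of_ne (a := x),
        Equiv.swap_apply_of_ne_of_ne]
      all_goals rintro rfl; contradiction
  have key : ∀ w ∈ A, π (a w) = a w ∧ π (b w) = b w := fun w hw =>
    ⟨h3 _ (mem_union_left _ (mem_image_of_mem _ hw)),
      h3 _ (mem_union_right _ (mem_image_of_mem _ hw))⟩
  symm
  refine card_bij (fun σ _ => π.trans σ) ?_ ?_ ?_
  · intro σ hσ
    simp only [G, mem_filter, mem_univ, true_and, mem_insert, forall_eq_or_imp] at hσ ⊢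
    simp only [Equiv.trans_apply, h1, h2]
    refine ⟨fun w hw => ?_, hσ.1⟩
    rw [(key w hw).1, (key w hw).2]
    exact hσ.2 w hw
  · intro σ _ τ _ h
    ext z
    have := congrArg (fun e : S ≃ T => e (π.symm z)) h
    simpa using this
  · intro σ hσ
    refine ⟨π.symm.trans σ, ?_, ?_⟩
    · simp only [G, mem_filter, mem_univ, true_and, mem_insert, forall_eq_or_imp] at hσ ⊢
      simp only [Equiv.trans_apply]
      rw [← h1, ← h2, Equiv.symm_apply_apply, Equiv.symm_apply_apply]
      refine ⟨hσ.2, fun w hw => ?_⟩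
      have e1 : π.symm (a w) = a w := by rw [Equiv.symm_apply_eq, (key w hw).1]
      have e2 : π.symm (b w) = b w := by rw [Equiv.symm_apply_eq, (key w hw).2]
      rw [e1, e2]
      exact hσ.1 w hw
    · ext z; simp

noncomputable def M : ℕ := (univ.filter (fun p : T × T => R p.1 p.2)).card

lemma deg_comp (d : ℕ) (hd : ∀ x, (univ.filter (fun y => R x y)).card ≤ d) (σ : S ≃ T) (x : S) :
    (univ.filter (fun y => R (σ x) (σ y))).card ≤ d := by
  refine le_trans ?_ (hd (σ x))
  apply card_le_card_of_injOn σ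
  · intro y hy; simpa using hy
  · exact σ.injective.injOn

lemma M_comp (σ : S ≃ T) :
    (univ.filter (fun p : S × S => R (σ p.1) (σ p.2))).card = M R := by
  unfold M
  apply card_bij (fun p _ => (σ p.1, σ p.2))
  · intro p hp; simpa using hp
  · rintro ⟨x, y⟩ _ ⟨x', y'⟩ _ h; simpa using h
  · rintro ⟨x, y⟩ h
    exact ⟨(σ.symm x, σ.symm y), by simpa using h, by simp⟩

lemma Nr_le_M (A : Finset V) (σ : S ≃ T) : Nr a b R A σ ≤ M R := by
  rw [← M_comp R σ]
  apply card_le_card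
  intro p hp
  simp only [mem_filter, mem_univ, true_and] at hp ⊢
  exact hp.2

lemma Nr_le_U (d : ℕ) (hd : ∀ x, (univ.filter (fun y => R x y)).card ≤ d)
    (A : Finset V) (σ : S ≃ T) : Nr a b R A σ ≤ (U a b A).card * d := by
  refine le_trans ?_ (fst_bound (fun x y => R (σ x) (σ y)) d (deg_comp R d hd σ) _)
  apply card_le_card
  intro p hp
  simp only [mem_filter, mem_univ, true_and, mem_offDiag] at hp ⊢
  exact ⟨hp.1.1, hp.2⟩

lemma M_le_Nr (ha : Function.Injective a) (hb : Function.Injective b)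
    (hab : ∀ v w, a v ≠ b w)
    (hsym : ∀ x y, R x y → R y x) (hirr : ∀ x, ¬ R x x)
    (d : ℕ) (hd : ∀ x, (univ.filter (fun y => R x y)).card ≤ d)
    (A : Finset V) (σ : S ≃ T) : M R ≤ Nr a b R A σ + 4 * A.card * d := by
  have h1 := fst_bound (fun x y => R (σ x) (σ y)) d (deg_comp R d hd σ) (sock a b A)
  have h2 := snd_bound (fun x y => R (σ x) (σ y)) d (fun x y => hsym _ _)
    (deg_comp R d hd σ) (sock a b A)
  rw [sock_card a b ha hb hab] at h1 h2
  rw [← M_comp R σ]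
  have : (univ.filter (fun p : S × S => R (σ p.1) (σ p.2))) ⊆
      ((U a b A).offDiag.filter (fun p => R (σ p.1) (σ p.2))) ∪
      (univ.filter (fun p : S × S => p.1 ∈ sock a b A ∧ R (σ p.1) (σ p.2)) ∪
      univ.filter (fun p : S × S => p.2 ∈ sock a b A ∧ R (σ p.1) (σ p.2))) := by
    rintro ⟨x, y⟩ h
    simp only [mem_filter, mem_univ, true_and, mem_union, mem_offDiag, U, mem_compl] at h ⊢
    by_cases hx : x ∈ sock a b A
    · simp [hx, h]
    by_cases hy : y ∈ sock a b A
    · simp [hy, h]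
    have : x ≠ y := by rintro rfl; exact hirr _ h
    simp [hx, hy, h, this]
  have h3 := (card_le_card this).trans ((card_union_le _ _).trans
    (Nat.add_le_add_left (card_union_le _ _) _))
  unfold Nr
  nlinarith

/-- normalized factorial moment -/
noncomputable def Sm (k : ℕ) : ℝ :=
  (∑ A ∈ powersetCard k (univ : Finset V), ((G a b R A).card : ℝ)) / (Fintype.card (S ≃ T) : ℝ)

lemma Sm_succ (k : ℕ) : ((k : ℝ) + 1) * Sm a b R (k + 1) =
    (∑ A ∈ powersetCard k (univ : Finset V), ∑ v ∈ Aᶜ, ((G a b R (insert v A)).card : ℝ)) /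
      (Fintype.card (S ≃ T) : ℝ) := by
  unfold Sm
  rw [← mul_div_assoc]
  congr 1
  have e1 : ((k : ℝ) + 1) * ∑ A ∈ powersetCard (k+1) (univ : Finset V), ((G a b R A).card : ℝ)
      = ∑ A ∈ powersetCard (k+1) (univ : Finset V), ∑ v ∈ A, ((G a b R A).card : ℝ) := by
    rw [mul_sum]
    apply sum_congr rfl
    intro A hA
    rw [mem_powersetCard] at hA
    rw [sum_const, hA.2]
    simp
  rw [e1, sum_sigma', sum_sigma']
  symm
  refine sum_bij' (fun p _ => ⟨insert p.2 p.1, p.2⟩) (fun p _ => ⟨p.1.erase p.2, p.2⟩) ?_ ?_ ?_ ?_ ?_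
  · rintro ⟨A, v⟩ h
    simp only [mem_sigma, mem_powersetCard, subset_univ, true_and, mem_compl, mem_insert,
      true_or, and_true] at h ⊢
    rw [card_insert_of_notMem h.2, h.1]
  · rintro ⟨A, v⟩ h
    simp only [mem_sigma, mem_powersetCard, subset_univ, true_and, mem_compl, mem_erase,
      ne_eq, not_true, false_and, not_false_iff, and_true] at h ⊢
    rw [card_erase_of_mem h.2, h.1]
    rfl
  · rintro ⟨A, v⟩ h
    simp only [mem_sigma, mem_compl] at h
    simp [erase_insert h.2]
  · rintro ⟨A, v⟩ h
    simp only [mem_sigma] at h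
    simp [insert_erase h.2]
  · rintro ⟨A, v⟩ h
    rfl

lemma Sm_nonneg (k : ℕ) : 0 ≤ Sm a b R k := by unfold Sm; positivity

lemma Sm_zero (h : Fintype.card S = Fintype.card T) : Sm a b R 0 = 1 := by
  have e : Nonempty (S ≃ T) := ⟨Fintype.equivOfCardEq h⟩
  have : (Fintype.card (S ≃ T) : ℝ) ≠ 0 := by
    exact_mod_cast Fintype.card_ne_zero
  unfold Sm G
  simp [this]

lemma two_V_le (ha : Function.Injective a) (hb : Function.Injective b)
    (hab : ∀ v w, a v ≠ b w) : 2 * Fintype.card V ≤ Fintype.card S := by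
  have := U_card a b ha hb hab univ
  rw [card_univ] at this
  omega

/-- one-step bounds: generic upper bound -/
lemma Sm_upper (ha : Function.Injective a) (hb : Function.Injective b)
    (hab : ∀ v w, a v ≠ b w) (k : ℕ) (B : ℝ)
    (hB : ∀ A : Finset V, A.card = k → ∀ σ : S ≃ T, (Nr a b R A σ : ℝ) ≤ B) :
    ((Fintype.card S : ℝ) - 2 * k) * ((Fintype.card S : ℝ) - 2 * k - 1) *
      (((k : ℝ) + 1) * Sm a b R (k + 1)) ≤ ((Fintype.card V : ℝ) - k) * B * Sm a b R k := by
  rw [Sm_succ]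
  unfold Sm
  rw [← mul_div_assoc, ← mul_div_assoc]
  apply div_le_div_of_nonneg_right _ (by positivity)
  rw [mul_sum, mul_sum]
  apply sum_le_sum
  intro A hA
  rw [mem_powersetCard] at hA
  have hk := hA.2
  rw [mul_sum]
  have hV : ((Aᶜ.card : ℕ) : ℝ) = (Fintype.card V : ℝ) - k := by
    have := card_compl_add_card A
    rw [hk] at this
    rw [← this]; push_cast; ring
  rw [← hV, mul_assoc, ← nsmul_eq_mul]
  apply sum_le_card_nsmul
  intro v hv
  rw [mem_compl] at hv
  have h := step_eq a b R ha hb hab A v hv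
  have hU := U_card a b ha hb hab A
  have hUr : ((U a b A).card : ℝ) = (Fintype.card S : ℝ) - 2 * k := by
    rw [← hU, hk]; push_cast; ring
  have hoff : ((U a b A).offDiag.card : ℝ) =
      ((Fintype.card S : ℝ) - 2 * k) * ((Fintype.card S : ℝ) - 2 * k - 1) := by
    rw [← hUr, offDiag_card, Nat.cast_sub (Nat.le_mul_self _)]
    push_cast; ring
  rw [← hoff]
  have h' : ((U a b A).offDiag.card : ℝ) * (G a b R (insert v A)).card =
      ∑ σ ∈ G a b R A, (Nr a b R A σ : ℝ) := by exact_mod_cast h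
  rw [h']
  calc _ ≤ (G a b R A).card • B := sum_le_card_nsmul _ _ _ (fun σ _ => hB A hk σ)
    _ = _ := by rw [nsmul_eq_mul]; ring

lemma Sm_lower (ha : Function.Injective a) (hb : Function.Injective b)
    (hab : ∀ v w, a v ≠ b w) (k : ℕ) (B : ℝ)
    (hB : ∀ A : Finset V, A.card = k → ∀ σ : S ≃ T, B ≤ (Nr a b R A σ : ℝ)) :
    ((Fintype.card V : ℝ) - k) * B * Sm a b R k ≤
    ((Fintype.card S : ℝ) - 2 * k) * ((Fintype.card S : ℝ) - 2 * k - 1) *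
      (((k : ℝ) + 1) * Sm a b R (k + 1)) := by
  rw [Sm_succ]
  unfold Sm
  rw [← mul_div_assoc, ← mul_div_assoc]
  apply div_le_div_of_nonneg_right _ (by positivity)
  rw [mul_sum, mul_sum]
  apply sum_le_sum
  intro A hA
  rw [mem_powersetCard] at hA
  have hk := hA.2
  rw [mul_sum]
  have hV : ((Aᶜ.card : ℕ) : ℝ) = (Fintype.card V : ℝ) - k := by
    have := card_compl_add_card A
    rw [hk] at this
    rw [← this]; push_cast; ring
  rw [← hV, mul_assoc, ← nsmul_eq_mul]
  apply card_nsmul_le_sum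
  intro v hv
  rw [mem_compl] at hv
  have h := step_eq a b R ha hb hab A v hv
  have hU := U_card a b ha hb hab A
  have hUr : ((U a b A).card : ℝ) = (Fintype.card S : ℝ) - 2 * k := by
    rw [← hU, hk]; push_cast; ring
  have hoff : ((U a b A).offDiag.card : ℝ) =
      ((Fintype.card S : ℝ) - 2 * k) * ((Fintype.card S : ℝ) - 2 * k - 1) := by
    rw [← hUr, offDiag_card, Nat.cast_sub (Nat.le_mul_self _)]
    push_cast; ring
  rw [← hoff]
  have h' : ((U a b A).offDiag.card : ℝ) * (G a b R (insert v A)).card =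
      ∑ σ ∈ G a b R A, (Nr a b R A σ : ℝ) := by exact_mod_cast h
  rw [h']
  calc _ = (G a b R A).card • B := by rw [nsmul_eq_mul]; ring
    _ ≤ _ := card_nsmul_le_sum _ _ _ (fun σ _ => hB A hk σ)

lemma Sm_eq_zero (k : ℕ) (hk : Fintype.card V < k) : Sm a b R k = 0 := by
  unfold Sm
  rw [powersetCard_eq_empty.2 (by rwa [card_univ])]
  simp

lemma Sm_dom (ha : Function.Injective a) (hb : Function.Injective b)
    (hab : ∀ v w, a v ≠ b w) (hST : Fintype.card S = Fintype.card T)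
    (d : ℕ) (hd : ∀ x, (univ.filter (fun y => R x y)).card ≤ d) (k : ℕ) :
    Sm a b R k ≤ (d : ℝ) ^ k / (k.factorial : ℝ) := by
  induction k with
  | zero => simp [Sm_zero a b R hST]
  | succ k ih =>
    by_cases hk : Fintype.card V < k + 1
    · rw [Sm_eq_zero a b R _ hk]; positivity
    push Not at hk
    have h2 := two_V_le a b ha hb hab
    have hu := Sm_upper a b R ha hb hab k (((Fintype.card S : ℝ) - 2 * k) * d) (by
      intro A hA σ
      have h := Nr_le_U a b R d hd A σ
      have hU := U_card a b ha hb hab A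
      have hUr : ((U a b A).card : ℝ) = (Fintype.card S : ℝ) - 2 * k := by
        rw [← hU, hA]; push_cast; ring
      rw [← hUr]
      exact_mod_cast h)
    have hSr : (2 : ℝ) * Fintype.card V ≤ Fintype.card S := by exact_mod_cast h2
    have hkr : (k : ℝ) + 1 ≤ Fintype.card V := by exact_mod_cast hk
    set E : ℝ := (Fintype.card S : ℝ)
    set n : ℝ := (Fintype.card V : ℝ)
    have p1 : 0 < E - 2 * k := by linarith
    have p2 : 0 < E - 2 * k - 1 := by linarith
    have hn : n - k ≤ E - 2 * k - 1 := by linarith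
    have hS := Sm_nonneg a b R k
    have h3 : ((k : ℝ) + 1) * Sm a b R (k + 1) ≤ d * Sm a b R k := by
      have h4 : (n - k) * ((E - 2 * k) * d) * Sm a b R k ≤
          (E - 2 * k) * (E - 2 * k - 1) * (d * Sm a b R k) := by
        have : 0 ≤ (E - 2 * k) * (d * Sm a b R k) := by positivity
        nlinarith
      exact le_of_mul_le_mul_left (hu.trans h4) (mul_pos p1 p2)
    rw [Nat.factorial_succ, pow_succ]
    push_cast
    rw [le_div_iff₀ (by positivity)]
    rw [le_div_iff₀ (by positivity)] at ih
    have : (0 : ℝ) ≤ d := by positivity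
    have hf : (0 : ℝ) < k.factorial := by positivity
    nlinarith [mul_le_mul_of_nonneg_right h3 hf.le, mul_le_mul_of_nonneg_left ih this]

lemma incl_excl : (((univ.filter (fun σ : S ≃ T => ∀ v, ¬ R (σ (a v)) (σ (b v)))).card : ℝ) /
      (Fintype.card (S ≃ T) : ℝ)) = ∑' k : ℕ, (-1 : ℝ) ^ k * Sm a b R k := by
  rw [tsum_eq_sum (s := range (Fintype.card V + 1))]
  swap
  · intro k hk
    rw [Sm_eq_zero a b R k (by simpa using hk), mul_zero]
  unfold Sm
  simp_rw [← mul_div_assoc]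
  rw [← sum_div]
  congr 1
  have e1 : ∀ k, ∑ A ∈ powersetCard k (univ : Finset V), ((G a b R A).card : ℝ) =
      ∑ σ : S ≃ T, (((univ.filter (fun v => R (σ (a v)) (σ (b v)))).card.choose k : ℕ) : ℝ) := by
    intro k
    unfold G
    simp_rw [card_filter, Nat.cast_sum]
    rw [sum_comm]
    apply sum_congr rfl
    intro σ _
    rw [← card_filter, ← card_powersetCard, ← Nat.cast_sum, ← card_filter]
    congr 2
    ext A
    simp only [mem_filter, mem_powersetCard, subset_univ, true_and, subset_iff, mem_univ]
    tauto
  simp_rw [e1, mul_sum]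
  rw [sum_comm, card_filter]
  push_cast
  apply sum_congr rfl
  intro σ _
  set X := (univ.filter (fun v => R (σ (a v)) (σ (b v)))).card with hX
  have hXn : X ≤ Fintype.card V := card_le_univ _
  have e2 : ∑ k ∈ range (Fintype.card V + 1), (-1 : ℝ) ^ k * (X.choose k : ℝ) =
      ∑ k ∈ range (X + 1), (-1 : ℝ) ^ k * (X.choose k : ℝ) := by
    symm
    apply sum_subset
    · intro k; simp only [mem_range]; omega
    · intro k _ hk
      rw [Nat.choose_eq_zero_of_lt (by simpa using hk)]; simp
  rw [e2]
  have h := @Int.alternating_sum_range_choose X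
  have h' : ∑ k ∈ range (X + 1), (-1 : ℝ) ^ k * (X.choose k : ℝ) = if X = 0 then 1 else 0 := by
    exact_mod_cast h
  rw [h']
  congr 1
  rw [hX, card_eq_zero, filter_eq_empty_iff]
  simp

end inst

/-- Lemma B: sharing probability -/
lemma share {S T : Type*} [Fintype S] [Fintype T]
    [DecidableEq S] [DecidableEq T] (Q : T → T → Prop) (d : ℕ)
    (hd : ∀ x, (univ.filter (fun y => Q x y)).card ≤ d)
    (W : Finset S) (z w : S) (hz : z ∉ W) (hw : w ∈ W) (F : (S ≃ T) → Prop)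
    (hF : ∀ z' ∉ W, ∀ σ : S ≃ T, F σ → F ((Equiv.swap z z').trans σ)) :
    (Fintype.card S - W.card) * (univ.filter (fun σ : S ≃ T => F σ ∧ Q (σ w) (σ z))).card ≤
      d * (univ.filter F).card := by
  have h1 : ∀ z' ∈ Wᶜ, (univ.filter (fun σ : S ≃ T => F σ ∧ Q (σ w) (σ z))).card ≤
      ((univ.filter F).filter (fun σ : S ≃ T => Q (σ w) (σ z'))).card := by
    intro z' hz'
    rw [mem_compl] at hz'
    apply card_le_card_of_injOn (fun σ => (Equiv.swap z z').trans σ)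
    · intro σ hσ
      simp only [coe_filter, mem_univ, true_and, Set.mem_ofPred_eq, mem_filter] at hσ ⊢
      refine ⟨hF z' hz' σ hσ.1, ?_⟩
      simp only [Equiv.trans_apply, Equiv.swap_apply_right]
      rw [Equiv.swap_apply_of_ne_of_ne]
      · exact hσ.2
      · rintro rfl; contradiction
      · rintro rfl; contradiction
    · intro σ _ τ _ h
      ext x
      have := congrArg (fun e : S ≃ T => e ((Equiv.swap z z') x)) h
      simpa using this
  have h2 := card_nsmul_le_sum Wᶜ _ _ h1
  rw [card_compl, smul_eq_mul] at h2
  refine h2.trans ?_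
  have h := sum_card_bipartiteAbove_eq_sum_card_bipartiteBelow (s := univ.filter F)
    (t := Wᶜ) (fun (σ : S ≃ T) (z' : S) => Q (σ w) (σ z'))
  unfold bipartiteAbove bipartiteBelow at h
  rw [← h, mul_comm, ← smul_eq_mul]
  apply sum_le_card_nsmul
  intro σ _
  exact (card_le_card (filter_subset_filter _ (subset_univ _))).trans (deg_comp Q d hd σ w)

lemma share2 {S T : Type*} [Fintype S] [Fintype T]
    [DecidableEq S] [DecidableEq T] (Q : T → T → Prop) (d : ℕ)
    (hd : ∀ x, (univ.filter (fun y => Q x y)).card ≤ d)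
    (x y z w : S) (hxy : x ≠ y) (hzx : z ≠ x) (hzy : z ≠ y) (hzw : z ≠ w) :
    (Fintype.card S - 3) * ((Fintype.card S - 1) *
      (univ.filter (fun σ : S ≃ T => Q (σ x) (σ y) ∧ Q (σ w) (σ z))).card) ≤
      d * (d * Fintype.card (S ≃ T)) := by
  have h1 := share Q d hd {x, y, w} z w (by simp [*]) (by simp)
    (fun σ : S ≃ T => Q (σ x) (σ y)) (by
      intro z' hz' σ h
      simp only [mem_insert, mem_singleton, not_or] at hz'
      simp only [Equiv.trans_apply]
      rw [Equiv.swap_apply_of_ne_of_ne hzx.symm (Ne.symm hz'.1),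
        Equiv.swap_apply_of_ne_of_ne hzy.symm (Ne.symm hz'.2.1)]
      exact h)
  have h2 := share Q d hd {x} y x (by simp [hxy.symm]) (by simp)
    (fun σ : S ≃ T => True) (by simp)
  simp only [true_and, card_singleton, filter_true, card_univ] at h2
  have h3 : ({x, y, w} : Finset S).card ≤ 3 := card_le_three
  set K := (univ.filter (fun σ : S ≃ T => Q (σ x) (σ y) ∧ Q (σ w) (σ z))).card
  set L := (univ.filter (fun σ : S ≃ T => Q (σ x) (σ y))).card
  calc (Fintype.card S - 3) * ((Fintype.card S - 1) * K)
      = (Fintype.card S - 1) * ((Fintype.card S - 3) * K) := by ring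
    _ ≤ (Fintype.card S - 1) * ((Fintype.card S - ({x, y, w} : Finset S).card) * K) := by
        gcongr
    _ ≤ (Fintype.card S - 1) * (d * L) := by gcongr
    _ = d * ((Fintype.card S - 1) * L) := by ring
    _ ≤ _ := by gcongr

/-- Poisson limit from recursion bounds -/
lemma poisson_seq (Sq : ℕ → ℕ → ℝ) (En : ℕ → ℝ) (hE : Tendsto En atTop atTop)
    (p C d : ℝ)
    (h0 : ∀ i, Sq i 0 = 1) (hnn : ∀ i k, 0 ≤ Sq i k)
    (hdom : ∀ i k, Sq i k ≤ d ^ k / (k.factorial : ℝ))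
    (hup : ∀ i (k : ℕ), (En i - 2 * k) * (En i - 2 * k - 1) * (((k : ℝ) + 1) * Sq i (k + 1)) ≤
      (p * En i - k) * (C * En i) * Sq i k)
    (hlo : ∀ i (k : ℕ), (p * En i - k) * (C * En i - 4 * k * d) * Sq i k ≤
      (En i - 2 * k) * (En i - 2 * k - 1) * (((k : ℝ) + 1) * Sq i (k + 1))) :
    Tendsto (fun i => ∑' k : ℕ, (-1 : ℝ) ^ k * Sq i k) atTop (nhds (Real.exp (-(p * C)))) := by
  have hinv : Tendsto (fun i => (En i)⁻¹) atTop (nhds 0) := hE.inv_tendsto_atTop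
  have hlim : ∀ k : ℕ, Tendsto (fun i => Sq i k) atTop (nhds ((p * C) ^ k / (k.factorial : ℝ))) := by
    intro k
    induction k with
    | zero => simp [h0]
    | succ k ih =>
      have c (x : ℝ) : Tendsto (fun i => x * (En i)⁻¹) atTop (nhds 0) := by
        simpa using hinv.const_mul x
      have hden : Tendsto (fun i => (1 - 2 * k * (En i)⁻¹) * (1 - (2 * k + 1) * (En i)⁻¹) * ((k:ℝ) + 1))
          atTop (nhds ((1 - 0) * (1 - 0) * ((k:ℝ) + 1))) := by
        exact ((tendsto_const_nhds.sub (c _)).mul (tendsto_const_nhds.sub (c _))).mul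
          tendsto_const_nhds
      have hu : Tendsto (fun i => (p - k * (En i)⁻¹) * C * Sq i k /
          ((1 - 2 * k * (En i)⁻¹) * (1 - (2 * k + 1) * (En i)⁻¹) * ((k:ℝ) + 1)))
          atTop (nhds ((p - 0) * C * ((p * C) ^ k / (k.factorial : ℝ)) /
            ((1 - 0) * (1 - 0) * ((k:ℝ) + 1)))) := by
        refine Tendsto.div ?_ hden (by simp; positivity)
        exact ((tendsto_const_nhds.sub (c _)).mul tendsto_const_nhds).mul ih
      have hl : Tendsto (fun i => (p - k * (En i)⁻¹) * (C - 4 * k * d * (En i)⁻¹) * Sq i k /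
          ((1 - 2 * k * (En i)⁻¹) * (1 - (2 * k + 1) * (En i)⁻¹) * ((k:ℝ) + 1)))
          atTop (nhds ((p - 0) * (C - 0) * ((p * C) ^ k / (k.factorial : ℝ)) /
            ((1 - 0) * (1 - 0) * ((k:ℝ) + 1)))) := by
        refine Tendsto.div ?_ hden (by simp; positivity)
        exact ((tendsto_const_nhds.sub (c _)).mul (tendsto_const_nhds.sub (c _))).mul ih
      have e : (p - 0) * C * ((p * C) ^ k / (k.factorial : ℝ)) /
            ((1 - 0) * (1 - 0) * ((k:ℝ) + 1)) = (p * C) ^ (k + 1) / ((k + 1).factorial : ℝ) := by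
        rw [Nat.factorial_succ]
        push_cast
        field_simp
        ring
      have e' : (p - 0) * (C - 0) * ((p * C) ^ k / (k.factorial : ℝ)) /
            ((1 - 0) * (1 - 0) * ((k:ℝ) + 1)) = (p * C) ^ (k + 1) / ((k + 1).factorial : ℝ) := by
        rw [← e]; ring
      rw [e] at hu
      rw [e'] at hl
      have hbig := hE.eventually_gt_atTop (2 * k + 1 : ℝ)
      refine tendsto_of_tendsto_of_tendsto_of_le_of_le' hl hu ?_ ?_
      · filter_upwards [hbig] with i hi
        have hk : (0:ℝ) ≤ k := by positivity
        have hEp : 0 < En i := by linarith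
        have q1 : 0 < En i - 2 * k := by linarith
        have q2 : 0 < En i - 2 * k - 1 := by linarith
        have r1 : (1 - 2 * k * (En i)⁻¹) = (En i - 2 * k) / En i := by field_simp
        have r2 : (1 - (2 * k + 1) * (En i)⁻¹) = (En i - 2 * k - 1) / En i := by field_simp; ring
        have r3 : (p - k * (En i)⁻¹) = (p * En i - k) / En i := by field_simp
        have r4 : (C - 4 * k * d * (En i)⁻¹) = (C * En i - 4 * k * d) / En i := by field_simp
        rw [r1, r2, r3, r4, div_le_iff₀ (by positivity)]
        have h := div_le_div_of_nonneg_right (hlo i k) (by positivity : 0 ≤ En i ^ 2)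
        calc _ = _ := ?_
          _ ≤ _ := h
          _ = _ := ?_
        · field_simp
        · field_simp
      · filter_upwards [hbig] with i hi
        have hk : (0:ℝ) ≤ k := by positivity
        have hEp : 0 < En i := by linarith
        have q1 : 0 < En i - 2 * k := by linarith
        have q2 : 0 < En i - 2 * k - 1 := by linarith
        have r1 : (1 - 2 * k * (En i)⁻¹) = (En i - 2 * k) / En i := by field_simp
        have r2 : (1 - (2 * k + 1) * (En i)⁻¹) = (En i - 2 * k - 1) / En i := by field_simp; ring
        have r3 : (p - k * (En i)⁻¹) = (p * En i - k) / En i := by field_simp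
        rw [r1, r2, r3, le_div_iff₀ (by positivity)]
        have h := div_le_div_of_nonneg_right (hup i k) (by positivity : 0 ≤ En i ^ 2)
        calc _ = _ := ?_
          _ ≤ _ := h
          _ = _ := ?_
        · field_simp
        · field_simp
  have hexp : Real.exp (-(p * C)) = ∑' k : ℕ, (-1 : ℝ) ^ k * ((p * C) ^ k / (k.factorial : ℝ)) := by
    rw [Real.exp_eq_exp_ℝ, NormedSpace.exp_eq_tsum_div]
    apply tsum_congr
    intro k
    rw [neg_pow, mul_div_assoc]
  rw [hexp]
  apply tendsto_tsum_of_dominated_convergence (bound := fun k => d ^ k / (k.factorial : ℝ))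
  · exact Real.summable_pow_div_factorial d
  · intro k
    exact (hlim k).const_mul _
  · refine Eventually.of_forall (fun i k => ?_)
    rw [norm_mul, norm_pow, norm_neg, norm_one, one_pow, one_mul, Real.norm_of_nonneg (hnn i k)]
    exact hdom i k


section conc
variable {D nc : ℕ} (deg : Fin D → ℕ) (s mr : Fin nc → ℕ)
    (Hbar : ∀ t : Fin nc, Matrix (Fin (mr t)) (Fin (s t)) (ZMod 2))
    (vc : Fin D → ℕ) (mc : Fin nc → ℕ)

abbrev VN := Σ a : Fin D, Fin (vc a)
abbrev CN := Σ t : Fin nc, Fin (mc t)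
abbrev Sk := Σ v : VN vc, Fin (deg v.1)
abbrev Tk := Σ c : CN mc, Fin (s c.1)
abbrev V2 := {v : VN vc // deg v.1 = 2}

def sa (v : V2 deg vc) : Sk deg vc := ⟨v.1, ⟨0, by rw [v.2]; norm_num⟩⟩
def sb (v : V2 deg vc) : Sk deg vc := ⟨v.1, ⟨1, by rw [v.2]; norm_num⟩⟩

lemma sa_inj : Function.Injective (sa deg vc) := by
  intro v w h
  exact Subtype.ext (congrArg Sigma.fst h)

lemma sb_inj : Function.Injective (sb deg vc) := by
  intro v w h
  exact Subtype.ext (congrArg Sigma.fst h)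

lemma sa_ne_sb (v w : V2 deg vc) : sa deg vc v ≠ sb deg vc w := by
  intro h
  have h1 : v = w := Subtype.ext (congrArg Sigma.fst h)
  subst h1
  simp [sa, sb] at h

def RR (p q : Tk s mc) : Prop := p ≠ q ∧ ∀ c : CN mc,
  Matrix.mulVec (Hbar c.1)
    (fun jj : Fin (s c.1) => if (⟨c, jj⟩ : Tk s mc) = p ∨ (⟨c, jj⟩ : Tk s mc) = q then 1 else 0) = 0

def QQ (p q : Tk s mc) : Prop := p.1 = q.1

def W1 (σ : Sk deg vc ≃ Tk s mc) (v : VN vc) : Prop := ∀ c : CN mc,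
  Matrix.mulVec (Hbar c.1)
    (fun jj : Fin (s c.1) => if (σ.symm ⟨c, jj⟩).1 = v then 1 else 0) = 0

lemma event_iff (σ : Sk deg vc ≃ Tk s mc) :
    (∃ x : VN vc → ZMod 2, hammingNorm x = 1 ∧ ∀ t : Fin nc, ∀ idx : Fin (mc t),
      Matrix.mulVec (Hbar t) (fun jj : Fin (s t) => x ((σ.symm ⟨⟨t, idx⟩, jj⟩).1)) = 0) ↔
    ∃ v, W1 deg s mr Hbar vc mc σ v := by
  constructor
  · rintro ⟨x, hx, h⟩
    rw [hammingNorm, card_eq_one] at hx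
    obtain ⟨v, hv⟩ := hx
    refine ⟨v, fun c => ?_⟩
    rw [← h c.1 c.2]
    congr 1
    funext jj
    have := congrArg (fun F => (σ.symm ⟨c, jj⟩).1 ∈ F) hv
    simp only [mem_filter, mem_univ, true_and, mem_singleton, eq_iff_iff] at this
    have h2 : ∀ y : ZMod 2, y ≠ 0 → y = 1 := by decide
    split_ifs with h'
    · exact (h2 _ (this.2 h')).symm
    · by_contra hne
      exact h' (this.1 (fun h0 => hne h0.symm))
  · rintro ⟨v, h⟩
    refine ⟨fun u => if u = v then 1 else 0, ?_, fun t idx => h ⟨t, idx⟩⟩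
    rw [hammingNorm, card_eq_one]
    refine ⟨v, ?_⟩
    ext u
    simp

lemma W1_two (σ : Sk deg vc ≃ Tk s mc) (v : V2 deg vc) :
    W1 deg s mr Hbar vc mc σ v.1 ↔ RR s mr Hbar mc (σ (sa deg vc v)) (σ (sb deg vc v)) := by
  unfold W1 RR
  have hne : σ (sa deg vc v) ≠ σ (sb deg vc v) := fun h => sa_ne_sb deg vc v v (σ.injective h)
  simp only [hne, ne_eq, not_false_iff, true_and]
  apply forall_congr'
  intro c
  have : ∀ u : Sk deg vc, u.1 = v.1 ↔ (u = sa deg vc v ∨ u = sb deg vc v) := by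
    obtain ⟨v, hv⟩ := v
    rintro ⟨u, j⟩
    constructor
    · rintro h
      simp only at h
      subst h
      have hj := j.2
      simp only [hv] at hj
      simp only [sa, sb, Sigma.mk.injEq, heq_eq_eq, true_and, Fin.ext_iff]
      omega
    · rintro (h | h)
      · rw [h]; rfl
      · rw [h]; rfl
  simp only [this, Equiv.symm_apply_eq]

lemma RR_fst
    (hdist : ∀ t, ∀ v : Fin (s t) → ZMod 2,
      Matrix.mulVec (Hbar t) v = 0 → hammingNorm v ≠ 1) (p q : Tk s mc) (h : RR s mr Hbar mc p q) : p.1 = q.1 := by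
  by_contra hne
  apply hdist _ _ (h.2 p.1)
  rw [hammingNorm, card_eq_one]
  refine ⟨p.2, ?_⟩
  obtain ⟨c, j⟩ := p
  ext jj
  have : (⟨c, jj⟩ : Tk s mc) ≠ q := by rintro rfl; exact hne rfl
  simp [this]

lemma partner
    (hdist : ∀ t, ∀ v : Fin (s t) → ZMod 2,
      Matrix.mulVec (Hbar t) v = 0 → hammingNorm v ≠ 1) (σ : Sk deg vc ≃ Tk s mc) (v : VN vc) (h : W1 deg s mr Hbar vc mc σ v)
    (x : Fin (deg v.1)) : ∃ y, y ≠ x ∧ (σ ⟨v, x⟩).1 = (σ ⟨v, y⟩).1 := by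
  by_contra hcon
  push Not at hcon
  apply hdist _ _ (h (σ ⟨v, x⟩).1)
  rw [hammingNorm, card_eq_one]
  refine ⟨(σ ⟨v, x⟩).2, ?_⟩
  ext jj
  simp only [ne_eq, ite_eq_right_iff, one_ne_zero, imp_false, not_not, mem_filter, mem_univ,
    true_and, mem_singleton]
  constructor
  · intro h1
    generalize hu : σ.symm ⟨(σ ⟨v, x⟩).1, jj⟩ = u at h1
    obtain ⟨u, y⟩ := u
    simp only at h1
    subst h1
    rw [Equiv.symm_apply_eq] at hu
    have : y = x := by
      by_contra hne
      have h5 : (σ ⟨u, x⟩).1 = (σ ⟨u, y⟩).1 := by rw [← hu]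
      exact hcon y hne h5
    subst this
    generalize σ ⟨u, y⟩ = w at *
    obtain ⟨c, j⟩ := w
    simpa using hu
  · rintro rfl
    simp

lemma RR_symm (p q : Tk s mc) (h : RR s mr Hbar mc p q) : RR s mr Hbar mc q p := by
  refine ⟨h.1.symm, fun c => ?_⟩
  rw [← h.2 c]
  simp only [or_comm]

lemma QQ_deg (p : Tk s mc) : (univ.filter (fun q => QQ s mc p q)).card ≤ ∑ t, s t := by
  obtain ⟨c, j⟩ := p
  calc _ ≤ ((univ : Finset (Fin (s c.1))).image (fun j => (⟨c, j⟩ : Tk s mc))).card := by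
        apply card_le_card
        rintro ⟨c', j'⟩ h
        rw [mem_filter] at h
        have h' : c = c' := h.2
        subst h'
        simp
    _ ≤ _ := card_image_le
    _ = s c.1 := by simp
    _ ≤ _ := single_le_sum (f := s) (fun _ _ => Nat.zero_le _) (mem_univ _)

lemma RR_deg
    (hdist : ∀ t, ∀ v : Fin (s t) → ZMod 2,
      Matrix.mulVec (Hbar t) v = 0 → hammingNorm v ≠ 1) (p : Tk s mc) : (univ.filter (fun q => RR s mr Hbar mc p q)).card ≤ ∑ t, s t := by
  refine le_trans (card_le_card ?_) (QQ_deg s mc p)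
  intro q h
  simp only [mem_filter, mem_univ, true_and] at h ⊢
  exact RR_fst s mr Hbar mc hdist p q h

noncomputable def ind {n : ℕ} (p : Fin n × Fin n) : Fin n → ZMod 2 :=
  fun j => if j = p.1 ∨ j = p.2 then 1 else 0

noncomputable def prs {m n : ℕ} (H : Matrix (Fin m) (Fin n) (ZMod 2)) : Finset (Fin n × Fin n) :=
  univ.filter (fun p => p.1 ≠ p.2 ∧ Matrix.mulVec H (ind p) = 0)

lemma ind_supp {n : ℕ} (p : Fin n × Fin n) :
    (univ.filter (fun j => ind p j ≠ 0)) = {p.1, p.2} := by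
  ext j
  simp [ind]
  tauto

lemma prs_card {m n : ℕ} (H : Matrix (Fin m) (Fin n) (ZMod 2)) :
    (prs H).card = 2 * numWeight2 H := by
  unfold numWeight2
  have hn : ∀ v : Fin n → ZMod 2, hammingNorm v = (univ.filter (fun j => v j ≠ 0)).card := by
    intro v
    unfold hammingNorm
    congr
  rw [card_eq_sum_card_fiberwise (f := ind)
    (t := (localCode H).filter (fun v => hammingNorm v = 2)), mul_comm]
  · apply sum_const_nat
    intro v hv
    simp only [mem_filter, localCode, mem_univ, true_and] at hv
    obtain ⟨hv1, hv2⟩ := hv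
    rw [hn, card_eq_two] at hv2
    obtain ⟨x, y, hxy, hs⟩ := hv2
    have h2 : ∀ y : ZMod 2, y ≠ 0 → y = 1 := by decide
    have hvi : ∀ j, v j = if j = x ∨ j = y then 1 else 0 := by
      intro j
      have := congrArg (fun F => j ∈ F) hs
      simp only [mem_filter, mem_univ, true_and, mem_singleton, mem_insert, eq_iff_iff] at this
      split_ifs with h'
      · exact h2 _ (this.2 h')
      · by_contra hne
        exact h' (this.1 hne)
    rw [card_eq_two]
    refine ⟨(x, y), (y, x), by simp [hxy], ?_⟩
    ext ⟨p, q⟩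
    simp only [mem_filter, prs, mem_univ, true_and, mem_insert, mem_singleton, Prod.mk.injEq]
    constructor
    · rintro ⟨⟨hne, -⟩, rfl⟩
      have hp := ind_supp (p, q)
      rw [hs] at hp
      have h1 : p ∈ ({x, y} : Finset (Fin n)) := by rw [hp]; simp
      have h2 : q ∈ ({x, y} : Finset (Fin n)) := by rw [hp]; simp
      simp only [mem_insert, mem_singleton] at h1 h2
      rcases h1 with rfl | rfl <;> rcases h2 with rfl | rfl <;> simp_all
    · have e1 : ind (x, y) = v := by funext j; rw [hvi]; rfl
      have e2 : ind (y, x) = v := by funext j; rw [hvi]; simp [ind, or_comm]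
      rintro (⟨rfl, rfl⟩ | ⟨rfl, rfl⟩)
      · exact ⟨⟨hxy, by rw [e1]; exact hv1⟩, e1⟩
      · exact ⟨⟨hxy.symm, by rw [e2]; exact hv1⟩, e2⟩
  · rintro p hp
    simp only [prs, coe_filter, mem_univ, true_and, Set.mem_ofPred_eq, localCode,
      mem_filter] at hp ⊢
    refine ⟨hp.2, ?_⟩
    rw [hn, ind_supp, card_pair hp.1]

lemma M_RR
    (hdist : ∀ t, ∀ v : Fin (s t) → ZMod 2,
      Matrix.mulVec (Hbar t) v = 0 → hammingNorm v ≠ 1) : M (RR s mr Hbar mc) = ∑ t, mc t * (2 * numWeight2 (Hbar t)) := by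
  have : M (RR s mr Hbar mc) =
      ((univ : Finset (CN mc)).sigma (fun c => prs (Hbar c.1))).card := by
    unfold M
    symm
    apply card_bij (fun (p : Σ c : CN mc, Fin (s c.1) × Fin (s c.1)) _ =>
      ((⟨p.1, p.2.1⟩, ⟨p.1, p.2.2⟩) : Tk s mc × Tk s mc))
    · rintro ⟨c, j, k⟩ h
      simp only [mem_sigma, mem_univ, true_and, prs, mem_filter] at h ⊢
      refine ⟨by simpa using h.1, fun c' => ?_⟩
      by_cases hc : c' = c
      · subst hc
        rw [← h.2]
        congr 1
        funext jj
        simp [ind]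
      · simp [hc]
        exact Matrix.mulVec_zero _
    · rintro ⟨c, j, k⟩ _ ⟨c', j', k'⟩ _ h
      simp only [Prod.mk.injEq, Sigma.mk.injEq] at h
      obtain ⟨⟨rfl, h1⟩, -, h2⟩ := h
      simp_all
    · rintro ⟨⟨c, j⟩, ⟨c', j'⟩⟩ h
      simp only [mem_filter, mem_univ, true_and] at h
      have hc := RR_fst s mr Hbar mc hdist _ _ h
      simp only at hc
      subst hc
      refine ⟨⟨c, j, j'⟩, ?_, rfl⟩
      simp only [mem_sigma, mem_univ, true_and, prs, mem_filter]
      refine ⟨by simpa using h.1, ?_⟩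
      rw [← h.2 c]
      congr 1
      funext jj
      simp [ind]
  rw [this, card_sigma, Fintype.sum_sigma]
  apply sum_congr rfl
  intro t _
  simp [prs_card]

lemma card_Sk : Fintype.card (Sk deg vc) = ∑ a, vc a * deg a := by
  simp [Fintype.sum_sigma]

lemma card_Tk : Fintype.card (Tk s mc) = ∑ t, mc t * s t := by
  simp [Fintype.sum_sigma]

lemma card_V2 : Fintype.card (V2 deg vc) =
    ∑ a ∈ univ.filter (fun a => deg a = 2), vc a := by
  rw [Fintype.card_subtype, card_filter, Fintype.sum_sigma, sum_filter]
  apply sum_congr rfl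
  intro a _
  split_ifs <;> simp

abbrev Quad := Σ v : VN vc, Fin (deg v.1) × Fin (deg v.1) × Fin (deg v.1) × Fin (deg v.1)

noncomputable def badS : Finset (Quad deg vc) := univ.filter (fun q =>
  q.2.1 ≠ q.2.2.1 ∧ q.2.2.2.1 ≠ q.2.1 ∧ q.2.2.2.1 ≠ q.2.2.1 ∧ q.2.2.2.1 ≠ q.2.2.2.2)

noncomputable def badE (q : Quad deg vc) : Finset (Sk deg vc ≃ Tk s mc) := univ.filter (fun σ =>
  QQ s mc (σ ⟨q.1, q.2.1⟩) (σ ⟨q.1, q.2.2.1⟩) ∧ QQ s mc (σ ⟨q.1, q.2.2.2.2⟩) (σ ⟨q.1, q.2.2.2.1⟩))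

lemma card_Quad : Fintype.card (Quad deg vc) ≤ (∑ a, deg a) ^ 3 * Fintype.card (Sk deg vc) := by
  rw [card_Sk, mul_sum]
  simp only [Fintype.card_sigma, Fintype.sum_sigma, Fintype.card_prod, Fintype.card_fin,
    sum_const, card_univ, smul_eq_mul]
  apply sum_le_sum
  intro a _
  have : deg a ≤ ∑ a, deg a := single_le_sum (f := deg) (fun _ _ => Nat.zero_le _) (mem_univ _)
  calc vc a * (deg a * (deg a * (deg a * deg a))) = deg a ^ 3 * (vc a * deg a) := by ring
    _ ≤ _ := by gcongr

lemma badE_card (q : Quad deg vc) (hq : q ∈ badS deg vc) :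
    (Fintype.card (Sk deg vc) - 3) * ((Fintype.card (Sk deg vc) - 1) * (badE deg s vc mc q).card) ≤
      (∑ t, s t) * ((∑ t, s t) * Fintype.card (Sk deg vc ≃ Tk s mc)) := by
  obtain ⟨v, x, y, z, w⟩ := q
  simp only [badS, mem_filter, mem_univ, true_and] at hq
  exact share2 (QQ s mc) _ (QQ_deg s mc) _ _ _ _ (by simpa using hq.1) (by simpa using hq.2.1)
    (by simpa using hq.2.2.1) (by simpa using hq.2.2.2)

noncomputable def bad : Finset (Sk deg vc ≃ Tk s mc) := (badS deg vc).biUnion (badE deg s vc mc)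

lemma bad_card :
    (Fintype.card (Sk deg vc) - 3) * ((Fintype.card (Sk deg vc) - 1) * (bad deg s vc mc).card) ≤
      (∑ a, deg a) ^ 3 * Fintype.card (Sk deg vc) *
      ((∑ t, s t) * ((∑ t, s t) * Fintype.card (Sk deg vc ≃ Tk s mc))) := by
  have h1 : (bad deg s vc mc).card ≤ ∑ q ∈ badS deg vc, (badE deg s vc mc q).card :=
    card_biUnion_le
  calc _ ≤ (Fintype.card (Sk deg vc) - 3) * ((Fintype.card (Sk deg vc) - 1) *
        ∑ q ∈ badS deg vc, (badE deg s vc mc q).card) := by gcongr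
    _ = ∑ q ∈ badS deg vc, (Fintype.card (Sk deg vc) - 3) * ((Fintype.card (Sk deg vc) - 1) *
        (badE deg s vc mc q).card) := by rw [mul_sum, mul_sum]
    _ ≤ (badS deg vc).card • ((∑ t, s t) * ((∑ t, s t) * Fintype.card (Sk deg vc ≃ Tk s mc))) :=
        sum_le_card_nsmul _ _ _ (fun q hq => badE_card deg s vc mc q hq)
    _ ≤ _ := by
        rw [smul_eq_mul]
        apply Nat.mul_le_mul_right
        exact (card_le_univ _).trans (card_Quad deg vc)

noncomputable def evt : Finset (Sk deg vc ≃ Tk s mc) :=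
  univ.filter (fun σ => ∃ v, W1 deg s mr Hbar vc mc σ v)

noncomputable def Zr : Finset (Sk deg vc ≃ Tk s mc) :=
  univ.filter (fun σ => ∀ v : V2 deg vc,
    ¬ RR s mr Hbar mc (σ (sa deg vc v)) (σ (sb deg vc v)))

lemma evt_lower : (Zr deg s mr Hbar vc mc)ᶜ ⊆ evt deg s mr Hbar vc mc := by
  intro σ h
  simp only [Zr, compl_filter, mem_filter, mem_univ, true_and, not_forall, not_not, evt] at h ⊢
  obtain ⟨v, hv⟩ := h
  exact ⟨v.1, (W1_two deg s mr Hbar vc mc σ v).2 hv⟩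

lemma evt_upper
    (hdist : ∀ t, ∀ v : Fin (s t) → ZMod 2,
      Matrix.mulVec (Hbar t) v = 0 → hammingNorm v ≠ 1) (hdeg : ∀ a, 2 ≤ deg a) :
    evt deg s mr Hbar vc mc ⊆ (Zr deg s mr Hbar vc mc)ᶜ ∪ bad deg s vc mc := by
  intro σ h
  simp only [evt, mem_filter, mem_univ, true_and] at h
  obtain ⟨v, hv⟩ := h
  rw [mem_union]
  by_cases h2 : deg v.1 = 2
  · left
    simp only [Zr, compl_filter, mem_filter, mem_univ, true_and, not_forall, not_not]
    exact ⟨⟨v, h2⟩, (W1_two deg s mr Hbar vc mc σ ⟨v, h2⟩).1 hv⟩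
  · right
    have h3 : 3 ≤ deg v.1 := by have := hdeg v.1; omega
    let x : Fin (deg v.1) := ⟨0, by omega⟩
    obtain ⟨y, hy, hxy⟩ := partner deg s mr Hbar vc mc hdist σ v hv x
    obtain ⟨z, hz⟩ : ∃ z, z ∉ ({x, y} : Finset (Fin (deg v.1))) := by
      by_contra hcon
      push Not at hcon
      have h4 : (univ : Finset (Fin (deg v.1))).card ≤ ({x, y} : Finset _).card :=
        card_le_card (fun z _ => hcon z)
      have h5 : ({x, y} : Finset (Fin (deg v.1))).card ≤ 2 := card_le_two
      rw [card_univ, Fintype.card_fin] at h4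
      omega
    simp only [mem_insert, mem_singleton, not_or] at hz
    obtain ⟨w, hw, hzw⟩ := partner deg s mr Hbar vc mc hdist σ v hv z
    rw [bad, mem_biUnion]
    refine ⟨⟨v, x, y, z, w⟩, ?_, ?_⟩
    · simp only [badS, mem_filter, mem_univ, true_and]
      exact ⟨hy.symm, hz.1, hz.2, hw.symm⟩
    · rw [badE, mem_filter]
      exact ⟨mem_univ _, hxy, hzw.symm⟩

end conc

lemma main
    (D nc : ℕ)
    (deg : Fin D → ℕ) (hdeg : ∀ a, 2 ≤ deg a) 
    (lamv : Fin D → ℝ) (hlamsum : ∑ a, lamv a = 1)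
    (s mr : Fin nc → ℕ)
    (Hbar : ∀ t : Fin nc, Matrix (Fin (mr t)) (Fin (s t)) (ZMod 2))
    (hs : ∀ t, 0 < s t)
    (hdist : ∀ t, ∀ v : Fin (s t) → ZMod 2,
      Matrix.mulVec (Hbar t) v = 0 → hammingNorm v ≠ 1)
    (ρ : Fin nc → ℝ) (hρsum : ∑ t, ρ t = 1)
    (lam2 : ℝ) (hlam2 : lam2 = ∑ a ∈ Finset.univ.filter (fun a : Fin D => deg a = 2), lamv a)
    (C : ℝ) (hC : C = 2 * ∑ t, ρ t * (numWeight2 (Hbar t) : ℝ) / (s t : ℝ))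
    (E : ℕ → ℕ) (hE : StrictMono E)
    (vcount : Fin D → ℕ → ℕ)
    (hv : ∀ a i, (vcount a i : ℝ) * (deg a : ℝ) = lamv a * (E i : ℝ))
    (mcount : Fin nc → ℕ → ℕ)
    (hm : ∀ t i, (mcount t i : ℝ) * (s t : ℝ) = ρ t * (E i : ℝ)) :
    Tendsto (fun i : ℕ =>
        ((evt deg s mr Hbar (fun a => vcount a i) (fun t => mcount t i)).card : ℝ) /
          (Fintype.card (Sk deg (fun a => vcount a i) ≃ Tk s (fun t => mcount t i)) : ℝ))
      atTop (nhds (1 - Real.exp (-(lam2 * C / 2)))) := by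
  have cS : ∀ i, Fintype.card (Sk deg (fun a => vcount a i)) = E i := by
    intro i
    rw [card_Sk]
    have : ((∑ a, vcount a i * deg a : ℕ) : ℝ) = E i := by
      push_cast
      simp_rw [hv]
      rw [← sum_mul, hlamsum, one_mul]
    exact_mod_cast this
  have cT : ∀ i, Fintype.card (Tk s (fun t => mcount t i)) = E i := by
    intro i
    rw [card_Tk]
    have : ((∑ t, mcount t i * s t : ℕ) : ℝ) = E i := by
      push_cast
      simp_rw [hm]
      rw [← sum_mul, hρsum, one_mul]
    exact_mod_cast this
  have cV : ∀ i, (Fintype.card (V2 deg (fun a => vcount a i)) : ℝ) = lam2 / 2 * E i := by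
    intro i
    rw [card_V2, hlam2]
    push_cast
    rw [sum_div, sum_mul]
    apply sum_congr rfl
    intro a ha
    simp only [mem_filter, mem_univ, true_and] at ha
    have := hv a i
    rw [ha] at this
    push_cast at this
    linarith
  have cM : ∀ i, (M (RR s mr Hbar (fun t => mcount t i)) : ℝ) = C * E i := by
    intro i
    rw [M_RR s mr Hbar _ hdist, hC, mul_sum, sum_mul]
    push_cast
    apply sum_congr rfl
    intro t _
    have h := hm t i
    have hst : (s t : ℝ) ≠ 0 := by exact_mod_cast (hs t).ne'
    field_simp
    linear_combination (numWeight2 (Hbar t) : ℝ) * h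
  have hEr : Tendsto (fun i => (E i : ℝ)) atTop atTop :=
    tendsto_natCast_atTop_atTop.comp hE.tendsto_atTop
  have hP := poisson_seq
    (fun i k => Sm (sa deg (fun a => vcount a i)) (sb deg (fun a => vcount a i))
      (RR s mr Hbar (fun t => mcount t i)) k) (fun i => (E i : ℝ)) hEr (lam2 / 2) C
    ((∑ t, s t : ℕ) : ℝ)
    (fun i => Sm_zero _ _ _ ((cS i).trans (cT i).symm))
    (fun i k => Sm_nonneg _ _ _ k)
    (fun i k => Sm_dom _ _ _ (sa_inj _ _) (sb_inj _ _) (sa_ne_sb _ _)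
      ((cS i).trans (cT i).symm) _ (RR_deg s mr Hbar _ hdist) k)
    (by
      intro i k
      have h := Sm_upper (sa deg (fun a => vcount a i)) (sb deg (fun a => vcount a i))
        (RR s mr Hbar (fun t => mcount t i)) (sa_inj _ _) (sb_inj _ _) (sa_ne_sb _ _) k
        (C * E i) (by
          intro A hA σ
          rw [← cM]
          exact_mod_cast Nr_le_M _ _ _ A σ)
      rw [cS, cV] at h
      exact h)
    (by
      intro i k
      have h := Sm_lower (sa deg (fun a => vcount a i)) (sb deg (fun a => vcount a i))
        (RR s mr Hbar (fun t => mcount t i)) (sa_inj _ _) (sb_inj _ _) (sa_ne_sb _ _) k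
        (C * E i - 4 * k * ((∑ t, s t : ℕ) : ℝ)) (by
          intro A hA σ
          rw [← cM]
          have := M_le_Nr _ _ (RR s mr Hbar (fun t => mcount t i))
            (sa_inj deg _) (sb_inj _ _) (sa_ne_sb _ _)
            (RR_symm s mr Hbar _) (fun x hx => hx.1 rfl) _ (RR_deg s mr Hbar _ hdist) A σ
          rw [hA] at this
          have h' : ((M (RR s mr Hbar (fun t => mcount t i)) : ℕ) : ℝ) ≤
            ((Nr (sa deg (fun a => vcount a i)) (sb deg (fun a => vcount a i))
              (RR s mr Hbar (fun t => mcount t i)) A σ + 4 * k * ∑ t, s t : ℕ) : ℝ) := by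
            exact_mod_cast this
          rw [Nat.cast_add, Nat.cast_mul, Nat.cast_mul] at h'
          push_cast at h' ⊢
          linarith)
      rw [cS, cV] at h
      exact h)
  have hZ : Tendsto (fun i => ((Zr deg s mr Hbar (fun a => vcount a i) (fun t => mcount t i)).card : ℝ) /
      (Fintype.card (Sk deg (fun a => vcount a i) ≃ Tk s (fun t => mcount t i)) : ℝ))
      atTop (nhds (Real.exp (-(lam2 * C / 2)))) := by
    have e : lam2 / 2 * C = lam2 * C / 2 := by ring
    rw [e] at hP
    refine hP.congr (fun i => ?_)
    rw [← incl_excl]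
    rfl
  have hone : Tendsto (fun i => 1 - ((Zr deg s mr Hbar (fun a => vcount a i) (fun t => mcount t i)).card : ℝ) /
      (Fintype.card (Sk deg (fun a => vcount a i) ≃ Tk s (fun t => mcount t i)) : ℝ))
      atTop (nhds (1 - Real.exp (-(lam2 * C / 2)))) := tendsto_const_nhds.sub hZ
  set K : ℝ := (((∑ a, deg a) ^ 3 * ((∑ t, s t) * (∑ t, s t)) : ℕ) : ℝ) with hK
  have herr : Tendsto (fun i => K * (E i : ℝ) / (((E i : ℝ) - 3) * ((E i : ℝ) - 1))) atTop (nhds 0) := by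
    have hinv : Tendsto (fun i => ((E i : ℝ))⁻¹) atTop (nhds 0) := hEr.inv_tendsto_atTop
    have h1 : Tendsto (fun i => K * (E i : ℝ)⁻¹ / ((1 - 3 * (E i : ℝ)⁻¹) * (1 - (E i : ℝ)⁻¹)))
        atTop (nhds (K * 0 / ((1 - 3 * 0) * (1 - 0)))) :=
      (hinv.const_mul K).div ((tendsto_const_nhds.sub (hinv.const_mul 3)).mul
        (tendsto_const_nhds.sub hinv)) (by norm_num)
    rw [mul_zero, zero_div] at h1
    refine h1.congr' ?_
    filter_upwards [hEr.eventually_gt_atTop 3] with i hi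
    have q0 : (E i : ℝ) ≠ 0 := by linarith
    have q1 : (E i : ℝ) - 3 ≠ 0 := by linarith
    have q2 : (E i : ℝ) - 1 ≠ 0 := by linarith
    have r1 : 1 - 3 * (E i : ℝ)⁻¹ = ((E i : ℝ) - 3) / E i := by field_simp
    have r2 : 1 - (E i : ℝ)⁻¹ = ((E i : ℝ) - 1) / E i := by field_simp
    rw [r1, r2]
    field_simp
  have hupper := hone.add herr
  rw [add_zero] at hupper
  have htot : ∀ i, 0 < (Fintype.card (Sk deg (fun a => vcount a i) ≃ Tk s (fun t => mcount t i)) : ℝ) := by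
    intro i
    have e : Nonempty (Sk deg (fun a => vcount a i) ≃ Tk s (fun t => mcount t i)) :=
      ⟨Fintype.equivOfCardEq ((cS i).trans (cT i).symm)⟩
    exact_mod_cast Fintype.card_pos
  have hcompl : ∀ i, (((Zr deg s mr Hbar (fun a => vcount a i) (fun t => mcount t i))ᶜ.card : ℕ) : ℝ) /
      (Fintype.card (Sk deg (fun a => vcount a i) ≃ Tk s (fun t => mcount t i)) : ℝ) =
      1 - ((Zr deg s mr Hbar (fun a => vcount a i) (fun t => mcount t i)).card : ℝ) /
      (Fintype.card (Sk deg (fun a => vcount a i) ≃ Tk s (fun t => mcount t i)) : ℝ) := by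
    intro i
    have h := card_compl_add_card (Zr deg s mr Hbar (fun a => vcount a i) (fun t => mcount t i))
    have h' : (((Zr deg s mr Hbar (fun a => vcount a i) (fun t => mcount t i))ᶜ.card : ℕ) : ℝ) +
      ((Zr deg s mr Hbar (fun a => vcount a i) (fun t => mcount t i)).card : ℝ) =
      (Fintype.card (Sk deg (fun a => vcount a i) ≃ Tk s (fun t => mcount t i)) : ℝ) := by
      exact_mod_cast h
    have := (htot i).ne'
    rw [eq_sub_iff_add_eq, ← add_div, h', div_self this]
  refine tendsto_of_tendsto_of_tendsto_of_le_of_le' hone hupper ?_ ?_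
  · refine Eventually.of_forall (fun i => ?_)
    rw [← hcompl]
    apply div_le_div_of_nonneg_right _ (htot i).le
    exact_mod_cast card_le_card (evt_lower deg s mr Hbar _ _)
  · filter_upwards [hEr.eventually_gt_atTop 3] with i hi
    have hcard := (card_le_card (evt_upper deg s mr Hbar (fun a => vcount a i)
      (fun t => mcount t i) hdist hdeg)).trans (card_union_le _ _)
    rw [← hcompl]
    have hb := bad_card deg s (fun a => vcount a i) (fun t => mcount t i)
    rw [cS] at hb
    have hi' : 3 < E i := by exact_mod_cast hi
    set tot := Fintype.card (Sk deg (fun a => vcount a i) ≃ Tk s (fun t => mcount t i))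
    have hb' : ((E i : ℝ) - 3) * (((E i : ℝ) - 1) *
        ((bad deg s (fun a => vcount a i) (fun t => mcount t i)).card : ℝ)) ≤ K * E i * tot := by
      have h := (Nat.cast_le (α := ℝ)).2 hb
      rw [Nat.cast_mul, Nat.cast_mul, Nat.cast_sub (by omega), Nat.cast_sub (by omega)] at h
      refine (le_of_eq ?_).trans (h.trans (le_of_eq ?_))
      · push_cast; ring
      · rw [hK]; push_cast; ring
    have hbd : ((bad deg s (fun a => vcount a i) (fun t => mcount t i)).card : ℝ) / tot ≤
        K * (E i : ℝ) / (((E i : ℝ) - 3) * ((E i : ℝ) - 1)) := by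
      have q1 : 0 < (E i : ℝ) - 3 := by linarith
      have q2 : 0 < (E i : ℝ) - 1 := by linarith
      rw [div_le_div_iff₀ (htot i) (by positivity)]
      linarith
    have hc' : ((evt deg s mr Hbar (fun a => vcount a i) (fun t => mcount t i)).card : ℝ) ≤
        (((Zr deg s mr Hbar (fun a => vcount a i) (fun t => mcount t i))ᶜ.card : ℕ) : ℝ) +
        ((bad deg s (fun a => vcount a i) (fun t => mcount t i)).card : ℝ) := by
      exact_mod_cast hcard
    calc _ ≤ _ := div_le_div_of_nonneg_right hc' (htot i).le
      _ ≤ _ := by rw [add_div]; gcongr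

end GLDPC

/-- **Ensemble 2, probability of minimum distance 1.** In the unstructured irregular GLDPC
ensemble (configuration model) with VN degree classes `deg a ≥ 2` carrying edge fractions
`lamv a` (so `λ'(0) = λ_2 = ∑_{a : deg a = 2} lamv a`, and degree-2 VNs are present), CN types
`t` with local codes `ker H̄_t` of length `s t` and minimum distance `≥ 2`, edge fractions
`ρ t`, at least one CN type having weight-2 local codewords (`r_t = 2`), and
`C = 2 ∑_{t : r_t = 2} ρ_t A_2^{(t)}/s_t`, the probability (over the uniformly random
matching `σ` of VN sockets to CN sockets) that the minimum distance equals 1 — i.e. that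
some Hamming-weight-1 word is a codeword — tends to `1 − exp(−λ'(0)·C/2) > 0` as the
block length tends to infinity. -/
theorem stmt_2
    (D nc : ℕ)
    (deg : Fin D → ℕ) (hdeg : ∀ a, 2 ≤ deg a) (hdeg2 : ∃ a, deg a = 2)
    (lamv : Fin D → ℝ) (hlampos : ∀ a, 0 < lamv a) (hlamsum : ∑ a, lamv a = 1)
    (s mr : Fin nc → ℕ) (hs : ∀ t, 0 < s t)
    (Hbar : ∀ t : Fin nc, Matrix (Fin (mr t)) (Fin (s t)) (ZMod 2))
    (hdist : ∀ t, ∀ v : Fin (s t) → ZMod 2,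
      Matrix.mulVec (Hbar t) v = 0 → hammingNorm v ≠ 1)
    (hmin2 : ∃ t, 0 < numWeight2 (Hbar t))
    (ρ : Fin nc → ℝ) (hρpos : ∀ t, 0 < ρ t) (hρsum : ∑ t, ρ t = 1)
    (lam2 : ℝ) (hlam2 : lam2 = ∑ a ∈ Finset.univ.filter (fun a : Fin D => deg a = 2), lamv a)
    (C : ℝ) (hC : C = 2 * ∑ t, ρ t * (numWeight2 (Hbar t) : ℝ) / (s t : ℝ))
    (E : ℕ → ℕ) (hE : StrictMono E)
    (vcount : Fin D → ℕ → ℕ) (hvpos : ∀ a i, 0 < vcount a i)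
    (hv : ∀ a i, (vcount a i : ℝ) * (deg a : ℝ) = lamv a * (E i : ℝ))
    (mcount : Fin nc → ℕ → ℕ) (hmpos : ∀ t i, 0 < mcount t i)
    (hm : ∀ t i, (mcount t i : ℝ) * (s t : ℝ) = ρ t * (E i : ℝ)) :
    Tendsto (fun i : ℕ =>
        ((Finset.univ.filter
            (fun σ : (Σ v : (Σ a : Fin D, Fin (vcount a i)), Fin (deg v.1)) ≃
                (Σ cn : (Σ t : Fin nc, Fin (mcount t i)), Fin (s cn.1)) =>
              ∃ x : (Σ a : Fin D, Fin (vcount a i)) → ZMod 2,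
                hammingNorm x = 1 ∧
                ∀ t : Fin nc, ∀ idx : Fin (mcount t i),
                  Matrix.mulVec (Hbar t)
                    (fun jj : Fin (s t) => x ((σ.symm ⟨⟨t, idx⟩, jj⟩).1)) = 0)).card : ℝ)
          / (Fintype.card
              ((Σ v : (Σ a : Fin D, Fin (vcount a i)), Fin (deg v.1)) ≃
                (Σ cn : (Σ t : Fin nc, Fin (mcount t i)), Fin (s cn.1))) : ℝ))
      atTop (nhds (1 - Real.exp (-(lam2 * C / 2)))) ∧
    0 < 1 - Real.exp (-(lam2 * C / 2)) := by

  constructor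
  · refine (GLDPC.main D nc deg hdeg lamv hlamsum s mr Hbar hs hdist ρ hρsum lam2 hlam2 C hC E hE
      vcount hv mcount hm).congr (fun i => ?_)
    congr 1
    · congr 1
      unfold GLDPC.evt
      simp only [← GLDPC.event_iff]
  · have h1 : 0 < lam2 := by
      rw [hlam2]
      obtain ⟨a, ha⟩ := hdeg2
      exact Finset.sum_pos (fun a _ => hlampos a) ⟨a, by simp [ha]⟩
    have h2 : 0 < C := by
      rw [hC]
      obtain ⟨t, ht⟩ := hmin2
      have : 0 < ∑ t, ρ t * (numWeight2 (Hbar t) : ℝ) / (s t : ℝ) := by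
        apply Finset.sum_pos'
        · intro t _
          have := (hρpos t).le
          positivity
        · refine ⟨t, Finset.mem_univ _, ?_⟩
          have h3 := hρpos t
          have h4 : (0 : ℝ) < s t := by exact_mod_cast hs t
          have h5 : (0 : ℝ) < numWeight2 (Hbar t) := by exact_mod_cast ht
          positivity
      linarith
    have h3 : 0 < lam2 * C / 2 := by positivity
    have : Real.exp (-(lam2 * C / 2)) < 1 := by
      rw [Real.exp_lt_one_iff]
      linarith
    linarith
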